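/- Let p be a probability density on ℝ^d, and let q_{σ0} : ℝ^d × ℝ^d → ℝ be a kernel such that q_{σ0}(x̃|x) > 0 for all x, x̃, for each fixed x the map x̃ ↦ q_{σ0}(x̃|x) is a differentiable probability density, and the smoothed density p_{σ0}(x̃) = ∫ q_{σ0}(x̃|x) p(x) dx is positive, differentiable, and satisfies ∇_{x̃} p_{σ0}(x̃) = ∫ p(x) ∇_{x̃} q_{σ0}(x̃|x) dx for all x̃. Define the posterior kernel q_{σ0}(x|x̃) = p(x) q_{σ0}(x̃|x) / p_{σ0}(x̃), let p_M be an everywhere-positive probability density on ℝ^d, and for a measurable g : ℝ^d → ℝ^d let L_MDSM*(g) = ∫∫ p_M(x̃) q_{σ0}(x|x̃) ‖∇_{x̃} log q_{σ0}(x̃|x) + g(x̃)‖² dx dx̃. Let g* = −∇ log p_{σ0}. Then for every g for which L_MDSM*(g) and L_MDSM*(g*) are finite, L_MDSM*(g) − L_MDSM*(g*) = ∫ p_M(x̃) ‖∇ log p_{σ0}(x̃) + g(x̃)‖² dx̃ ≥ 0, with equality if and only if g = −∇ log p_{σ0} Lebesgue-almost everywhere; hence g* is, up to null sets, the unique minimizer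 of the multiscale denoising score matching objective. -/

import Mathlib

open MeasureTheory

/-!
Write `s = ∇ log p0`, `h = s + g` and, for fixed `xt`, `m x = p x * q xt x / p0 xt` and
`a x = ∇ log q(xt | x)`. Expanding the square around `a - s` gives
`m ‖a + g‖² - m ‖a - s‖² = 2 ⟪h, m • a - m • s⟫ + m ‖h‖²`.
Here `m` has integral one and `m • a = p0⁻¹ • (p • ∇q)` integrates to `s`, so the cross term
vanishes and the fibre integral over `x` is `‖h‖²` (`fibre_integral`). The difference of the two
objectives follows by Fubini applied to the difference of the two integrable integrands, which
also yields integrability of `pM ‖h‖²`, needed for the equality case.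

The interchange hypothesis on `∇p0` does not by itself say that `x ↦ p x • ∇q(xt | x)` is
integrable, and `q` is not assumed jointly measurable. Both points are recovered:
`x ↦ q xt x * p x` is integrable for every `xt` because its integral `p0 xt` is nonzero, so
`p • ∇q` is a.e. measurable as a limit of difference quotients
(`aestronglyMeasurable_smul_gradient`); and `m ‖a - s‖²` is integrable for almost every `xt`,
which dominates `m • a` through `t ≤ 1 + t²`.
-/

/-- The score of a positive differentiable function is its gradient divided by its value. -/
lemma gradient_log_eq {E : Type*} [NormedAddCommGroup E] [InnerProductSpace ℝ E]
    [CompleteSpace E] {f : E → ℝ} {x : E} (hf : DifferentiableAt ℝ f x) (hx : 0 < f x) :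
    gradient (fun y => Real.log (f y)) x = (f x)⁻¹ • gradient f x := by
  have h := (hf.hasFDerivAt.log hx.ne').fderiv
  simp only [gradient]
  rw [h]
  simp

/-- Only measurability of each slice `x ↦ q xt x * p x` is required: the gradient in `xt` is a
pointwise limit of a sequence of difference quotients of such slices. -/
lemma aestronglyMeasurable_smul_gradient {d : ℕ}
    {p : EuclideanSpace ℝ (Fin d) → ℝ}
    {q : EuclideanSpace ℝ (Fin d) → EuclideanSpace ℝ (Fin d) → ℝ}
    (hq_diff : ∀ x, Differentiable ℝ (fun xt => q xt x))
    (hqp : ∀ xt, AEStronglyMeasurable (fun x => q xt x * p x) volume)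
    (xt : EuclideanSpace ℝ (Fin d)) :
    AEStronglyMeasurable (fun x => p x • gradient (fun y => q y x) xt) volume := by
  have hdir : ∀ e : EuclideanSpace ℝ (Fin d),
      AEStronglyMeasurable (fun x => p x * fderiv ℝ (fun y => q y x) xt e) volume := by
    intro e
    refine aestronglyMeasurable_of_tendsto_ae Filter.atTop
      (f := fun (n : ℕ) x => (n : ℝ) * (q (xt + (n : ℝ)⁻¹ • e) x * p x - q xt x * p x)) ?_ ?_
    · intro n
      exact ((hqp _).sub (hqp _)).const_mul _
    · refine Filter.Eventually.of_forall fun x => ?_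
      have h := ((hq_diff x) xt).hasFDerivAt.lim e
        (c := fun n : ℕ => (n : ℝ)) (l := Filter.atTop) (by
          simpa using tendsto_natCast_atTop_atTop (R := ℝ))
      refine (h.const_mul (p x)).congr fun n => ?_
      simp only [smul_eq_mul]
      ring
  let b := EuclideanSpace.basisFun (Fin d) ℝ
  have hv : (fun x => p x • gradient (fun y => q y x) xt) =
      fun x => ∑ i, (p x * fderiv ℝ (fun y => q y x) xt (b i)) • b i := by
    funext x
    rw [← b.sum_repr' (p x • gradient (fun y => q y x) xt)]
    refine Finset.sum_congr rfl fun i _ => ?_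
    congr 1
    rw [inner_smul_right, real_inner_comm]
    simp [gradient]
  rw [hv]
  exact Finset.aestronglyMeasurable_fun_sum _ fun i _ => (hdir _).smul_const _

/-- Bias-variance identity on one fibre: `m` is a probability density, `s` is the `m`-mean of `a`,
and the excess of the quadratic risk of `-g` over that of `s` is `‖s + g‖²`. Integrability of
`m • a` is not assumed; it follows from finiteness of the risk of `s`. -/
lemma fibre_integral {X E : Type*} [MeasurableSpace X] {μ : Measure X}
    [NormedAddCommGroup E] [InnerProductSpace ℝ E] [CompleteSpace E]
    {m : X → ℝ} {a : X → E} {s : E} (g : E)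
    (hm : Integrable m μ) (hm0 : ∀ x, 0 ≤ m x) (hm1 : ∫ x, m x ∂μ = 1)
    (hma : AEStronglyMeasurable (fun x => m x • a x) μ)
    (hmean : ∫ x, m x • a x ∂μ = s)
    (hint : Integrable (fun x => m x * ‖a x + -s‖ ^ 2) μ) :
    ∫ x, (m x * ‖a x + g‖ ^ 2 - m x * ‖a x + -s‖ ^ 2) ∂μ = ‖s + g‖ ^ 2 := by
  have hI : Integrable (fun x => m x • a x) μ := by
    refine ((hm.add hint).add (hm.mul_const ‖s‖)).mono' hma
      (Filter.Eventually.of_forall fun x => ?_)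
    simp only [Pi.add_apply]
    rw [norm_smul, Real.norm_of_nonneg (hm0 x)]
    have h1 : ‖a x‖ ≤ ‖a x + -s‖ + ‖s‖ := by
      simpa using norm_add_le (a x + -s) s
    have h2 : ‖a x + -s‖ ≤ 1 + ‖a x + -s‖ ^ 2 := by
      nlinarith [sq_nonneg (‖a x + -s‖ - 1), norm_nonneg (a x + -s)]
    calc m x * ‖a x‖ ≤ m x * (1 + ‖a x + -s‖ ^ 2 + ‖s‖) :=
          mul_le_mul_of_nonneg_left (by linarith) (hm0 x)
      _ = _ := by ring
  have hJ : Integrable (fun x => m x • a x - m x • s) μ := hI.sub (hm.smul_const s)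
  have hexp : ∀ x, m x * ‖a x + g‖ ^ 2 - m x * ‖a x + -s‖ ^ 2 =
      2 * inner ℝ (s + g) (m x • a x - m x • s) + m x * ‖s + g‖ ^ 2 := by
    intro x
    have h1 : a x + g = (a x + -s) + (s + g) := by abel
    rw [h1, norm_add_sq_real, ← smul_sub, inner_smul_right, real_inner_comm, sub_eq_add_neg (a x)]
    ring
  simp_rw [hexp]
  rw [integral_add ((hJ.const_inner _).const_mul 2) (hm.mul_const _), integral_const_mul,
    integral_inner hJ, integral_sub hI (hm.smul_const s), integral_smul_const, hmean,
    integral_mul_const, hm1]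
  simp

/-- With the setup of multiscale denoising score matching
(`q` a positive differentiable kernel, `p0` the smoothed density with gradient obtained
by differentiation under the integral, `pM` an everywhere-positive sampling density),
let `g* = −∇ log p0`. For every measurable model score `g` with both objective values
finite,
`L_MDSM*(g) − L_MDSM*(g*) = ∫ pM(xt) ‖∇ log p0(xt) + g(xt)‖² dxt ≥ 0`,
with equality iff `g = −∇ log p0` Lebesgue-almost everywhere; hence `g*` is, up to null
sets, the unique minimizer of the MDSM objective. -/
theorem mdsm_star_unique_minimizer
    (d : ℕ) (hd : 0 < d)
    (p : EuclideanSpace ℝ (Fin d) → ℝ)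
    (hp_meas : Measurable p) (hp_nonneg : ∀ x, 0 ≤ p x) (hp_int : ∫ x, p x = 1)
    (q : EuclideanSpace ℝ (Fin d) → EuclideanSpace ℝ (Fin d) → ℝ)
    -- `q xt x` is the kernel `q_{σ₀}(xt | x)`
    (hq_pos : ∀ xt x, 0 < q xt x)
    (hq_diff : ∀ x, Differentiable ℝ (fun xt => q xt x))
    (hq_density : ∀ x, ∫ xt, q xt x = 1)
    (p0 : EuclideanSpace ℝ (Fin d) → ℝ)
    (hp0_def : ∀ xt, p0 xt = ∫ x, q xt x * p x)
    (hp0_pos : ∀ xt, 0 < p0 xt)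
    (hp0_grad : ∀ xt, HasGradientAt p0
      (∫ x, p x • gradient (fun y => q y x) xt) xt)
    (pM : EuclideanSpace ℝ (Fin d) → ℝ)
    (hpM_meas : Measurable pM) (hpM_pos : ∀ x, 0 < pM x) (hpM_int : ∫ x, pM x = 1) :
    ∀ g : EuclideanSpace ℝ (Fin d) → EuclideanSpace ℝ (Fin d), Measurable g →
      Integrable (fun z : EuclideanSpace ℝ (Fin d) × EuclideanSpace ℝ (Fin d) =>
        pM z.2 * (p z.1 * q z.2 z.1 / p0 z.2) *
          ‖gradient (fun y => Real.log (q y z.1)) z.2 + g z.2‖ ^ 2) →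
      Integrable (fun z : EuclideanSpace ℝ (Fin d) × EuclideanSpace ℝ (Fin d) =>
        pM z.2 * (p z.1 * q z.2 z.1 / p0 z.2) *
          ‖gradient (fun y => Real.log (q y z.1)) z.2 +
            -gradient (fun y => Real.log (p0 y)) z.2‖ ^ 2) →
      ((∫ z : EuclideanSpace ℝ (Fin d) × EuclideanSpace ℝ (Fin d),
            pM z.2 * (p z.1 * q z.2 z.1 / p0 z.2) *
              ‖gradient (fun y => Real.log (q y z.1)) z.2 + g z.2‖ ^ 2) -
          (∫ z : EuclideanSpace ℝ (Fin d) × EuclideanSpace ℝ (Fin d),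
            pM z.2 * (p z.1 * q z.2 z.1 / p0 z.2) *
              ‖gradient (fun y => Real.log (q y z.1)) z.2 +
                -gradient (fun y => Real.log (p0 y)) z.2‖ ^ 2) =
        ∫ xt, pM xt * ‖gradient (fun y => Real.log (p0 y)) xt + g xt‖ ^ 2) ∧
      (0 ≤ ∫ xt, pM xt * ‖gradient (fun y => Real.log (p0 y)) xt + g xt‖ ^ 2) ∧
      ((∫ xt, pM xt * ‖gradient (fun y => Real.log (p0 y)) xt + g xt‖ ^ 2) = 0 ↔
        g =ᵐ[volume] fun xt => -gradient (fun y => Real.log (p0 y)) xt) := by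
  intro g hg hFg hFs
  set s : EuclideanSpace ℝ (Fin d) → EuclideanSpace ℝ (Fin d) :=
    fun xt => gradient (fun y => Real.log (p0 y)) xt with hs
  have hqpI : ∀ xt, Integrable (fun x => q xt x * p x) := fun xt => by
    -- a nonintegrable function would have integral zero
    refine Integrable.of_integral_ne_zero ?_
    rw [← hp0_def]
    exact (hp0_pos xt).ne'
  have hvm := aestronglyMeasurable_smul_gradient hq_diff fun xt => (hqpI xt).aestronglyMeasurable
  have hdiff := hFg.sub hFs
  have hfib : ∀ᵐ xt : EuclideanSpace ℝ (Fin d),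
      ∫ x, (pM xt * (p x * q xt x / p0 xt) *
          ‖gradient (fun y => Real.log (q y x)) xt + g xt‖ ^ 2 -
        pM xt * (p x * q xt x / p0 xt) *
          ‖gradient (fun y => Real.log (q y x)) xt + -s xt‖ ^ 2) =
        pM xt * ‖s xt + g xt‖ ^ 2 := by
    filter_upwards [hFs.prod_left_ae] with xt hxt
    have hma : (fun x => (p x * q xt x / p0 xt) • gradient (fun y => Real.log (q y x)) xt) =
        fun x => (p0 xt)⁻¹ • (p x • gradient (fun y => q y x) xt) := by
      funext x
      rw [gradient_log_eq (hq_diff x xt) (hq_pos xt x), smul_smul, smul_smul]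
      congr 1
      have := (hq_pos xt x).ne'
      have := (hp0_pos xt).ne'
      field_simp
    have hmeq : (fun x => p x * q xt x / p0 xt) = fun x => q xt x * p x / p0 xt := by
      funext x
      rw [mul_comm]
    have hfibre := fibre_integral (μ := volume) (m := fun x => p x * q xt x / p0 xt)
      (a := fun x => gradient (fun y => Real.log (q y x)) xt) (s := s xt) (g xt)
      (by rw [hmeq]; exact (hqpI xt).div_const _)
      (fun x => div_nonneg (mul_nonneg (hp_nonneg x) (hq_pos xt x).le) (hp0_pos xt).le)
      (by rw [hmeq, integral_div, ← hp0_def]; exact div_self (hp0_pos xt).ne')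
      (by rw [hma]; exact (hvm xt).const_smul (p0 xt)⁻¹)
      (by
        rw [hma, integral_smul, ← (hp0_grad xt).gradient, hs]
        exact (gradient_log_eq (hp0_grad xt).differentiableAt (hp0_pos xt)).symm)
      (by
        refine (hxt.const_mul (pM xt)⁻¹).congr (Filter.Eventually.of_forall fun x => ?_)
        have := (hpM_pos xt).ne'
        simp only [hs]
        field_simp)
    rw [← hfibre, ← integral_const_mul]
    refine integral_congr_ae (Filter.Eventually.of_forall fun x => ?_)
    simp only
    ring
  have hR : Integrable fun xt => pM xt * ‖s xt + g xt‖ ^ 2 :=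
    (Integrable.integral_prod_right hdiff).congr hfib
  have hnn : 0 ≤ fun xt => pM xt * ‖s xt + g xt‖ ^ 2 :=
    fun xt => mul_nonneg (hpM_pos xt).le (sq_nonneg _)
  refine ⟨?_, integral_nonneg hnn, ?_⟩
  · rw [← integral_sub hFg hFs]
    exact (integral_prod_symm _ hdiff).trans (integral_congr_ae hfib)
  · refine (integral_eq_zero_iff_of_nonneg hnn hR).trans
      (Filter.eventually_congr (Filter.Eventually.of_forall fun xt => ?_))
    have := (hpM_pos xt).ne'
    change pM xt * ‖s xt + g xt‖ ^ 2 = 0 ↔ g xt = -s xt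
    rw [mul_eq_zero_iff_left this, sq_eq_zero_iff, norm_eq_zero, add_comm,
      add_eq_zero_iff_eq_neg]
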